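/- Let G be a finite minimal nonsupersoluble group. Then G is soluble and |π(G)| ≤ 3, where π(G) is the set of prime divisors of |G|. -/

import Mathlib

open Subgroup

/-- A finite group is supersoluble if it has a normal series, all of whose terms are
normal in the whole group, with cyclic factors. -/
def IsSupersoluble (G : Type*) [Group G] : Prop :=
  ∃ (n : ℕ) (c : Fin (n + 1) → Subgroup G) (hc : ∀ i, (c i).Normal),
    c 0 = ⊥ ∧ c (Fin.last n) = ⊤ ∧
    ∀ i : Fin n, c i.castSucc ≤ c i.succ ∧
      haveI := (hc i.castSucc).subgroupOf (c i.succ)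
      IsCyclic (↥(c i.succ) ⧸ ((c i.castSucc).subgroupOf (c i.succ)))

/-- `H` is a maximal subgroup of `K`, where `H ≤ K` are subgroups of a common group. -/
def IsMaximalIn {G : Type*} [Group G] (H K : Subgroup G) : Prop :=
  H ≤ K ∧ IsCoatom (H.subgroupOf K)

/-- The `n`-maximal subgroups of `G`: `0`-maximal is `G` itself, and an `(n+1)`-maximal
subgroup is a maximal subgroup of some `n`-maximal subgroup. -/
def IsNMaximal {G : Type*} [Group G] : ℕ → Subgroup G → Prop
  | 0, H => H = ⊤
  | n + 1, H => ∃ K : Subgroup G, IsNMaximal n K ∧ IsMaximalIn H K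

/-- `H` is `K`-`𝔘`-subnormal in `K`: there is a chain of subgroups
`H = H₀ ≤ H₁ ≤ ⋯ ≤ Hₜ = K` such that at each step either `H_{i-1}` is normal in `H_i`
or `H_i` modulo the core of `H_{i-1}` in `H_i` is supersoluble. -/
def IsKUSubnormalIn {G : Type*} [Group G] (H K : Subgroup G) : Prop :=
  ∃ (n : ℕ) (c : Fin (n + 1) → Subgroup G),
    c 0 = H ∧ c (Fin.last n) = K ∧
    ∀ i : Fin n, c i.castSucc ≤ c i.succ ∧
      (((c i.castSucc).subgroupOf (c i.succ)).Normal ∨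
        IsSupersoluble (↥(c i.succ) ⧸ ((c i.castSucc).subgroupOf (c i.succ)).normalCore))

/-- `H` is `K`-`𝔘`-subnormal in `G`. -/
def IsKUSubnormal {G : Type*} [Group G] (H : Subgroup G) : Prop :=
  IsKUSubnormalIn H ⊤

/-- `H` is `𝔘`-subnormal in `G`: there is a chain of subgroups
`H = H₀ ≤ H₁ ≤ ⋯ ≤ Hₙ = G` with `H_i` modulo the core of `H_{i-1}` in `H_i`
supersoluble at each step. -/
def IsUSubnormal {G : Type*} [Group G] (H : Subgroup G) : Prop :=
  ∃ (n : ℕ) (c : Fin (n + 1) → Subgroup G),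
    c 0 = H ∧ c (Fin.last n) = ⊤ ∧
    ∀ i : Fin n, c i.castSucc ≤ c i.succ ∧
      IsSupersoluble (↥(c i.succ) ⧸ ((c i.castSucc).subgroupOf (c i.succ)).normalCore)

/-- The supersoluble residual `G^𝔘` of `G`: the intersection of all normal subgroups `N`
of `G` with `G/N` supersoluble. -/
def ssResidual (G : Type*) [Group G] : Subgroup G :=
  ⨅ N ∈ {N : Subgroup G | ∃ hN : N.Normal, haveI := hN; IsSupersoluble (G ⧸ N)}, N

/-- `N` is a minimal normal subgroup of `G`. -/
def IsMinimalNormal {G : Type*} [Group G] (N : Subgroup G) : Prop :=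
  N.Normal ∧ N ≠ ⊥ ∧ ∀ M : Subgroup G, M.Normal → M ≤ N → M ≠ ⊥ → M = N

/-- `G` is minimal nonsupersoluble: not supersoluble, but all proper subgroups are. -/
def IsMinimalNonsupersoluble (G : Type*) [Group G] : Prop :=
  ¬ IsSupersoluble G ∧ ∀ H : Subgroup G, H ≠ ⊤ → IsSupersoluble H

/-- `G` is an `SDH`-group: minimal nonsupersoluble with `G^𝔘` a minimal normal subgroup. -/
def IsSDH (G : Type*) [Group G] : Prop :=
  IsMinimalNonsupersoluble G ∧ IsMinimalNormal (ssResidual G)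

/-- `H` is a Sylow `p`-subgroup of its ambient (finite) group. -/
def IsSylowSubgroup {G : Type*} [Group G] (p : ℕ) (H : Subgroup G) : Prop :=
  IsPGroup p H ∧ ¬ p ∣ H.index

/-- A finite group is Ore dispersive if, enumerating the prime divisors of `|G|`
in decreasing order as `p₁ > p₂ > ⋯ > pₙ`, for every `i` it has a normal subgroup of
order `p₁^{a₁} ⋯ p_i^{a_i}`. -/
def OreDispersive (G : Type*) [Group G] : Prop :=
  ∀ p : ℕ, p.Prime → ∃ N : Subgroup G, N.Normal ∧
    Nat.card N =
      ∏ q ∈ (Nat.card G).primeFactors.filter (fun q => p ≤ q),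
        q ^ (Nat.card G).factorization q

/-- `A/B` is a chief factor of `G`. -/
def IsChiefFactor {G : Type*} [Group G] (A B : Subgroup G) : Prop :=
  A.Normal ∧ B ≤ A ∧ ∃ hB : B.Normal,
    haveI := hB
    IsMinimalNormal (A.map (QuotientGroup.mk' B))

/-- The subgroups `H` and `K` of `G` are conjugate in `G`. -/
def ConjSubgroup {G : Type*} [Group G] (H K : Subgroup G) : Prop :=
  ∃ g : G, K = H.map (MulAut.conj g).toMonoidHom

/-- The Frattini subgroup of a subgroup `H` of `G`, as a subgroup of `G`. -/
def frattiniIn {G : Type*} [Group G] (H : Subgroup G) : Subgroup G :=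
  (frattini H).map H.subtype

/-- `G = P ⋊ (Q ⋊ R)` as an internal statement about subgroups `P`, `Q`, `R` of `G`. -/
def IsInternalSemidirect3 {G : Type*} [Group G] (P Q R : Subgroup G) : Prop :=
  P.Normal ∧ P ⊓ (Q ⊔ R) = ⊥ ∧ P ⊔ Q ⊔ R = ⊤ ∧
    (Q.subgroupOf (Q ⊔ R)).Normal ∧ Q ⊓ R = ⊥

/-- `G = P ⋊ (Q ⋊ (R ⋊ T))` as an internal statement about subgroups of `G`. -/
def IsInternalSemidirect4 {G : Type*} [Group G] (P Q R T : Subgroup G) : Prop :=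
  P.Normal ∧ P ⊓ (Q ⊔ R ⊔ T) = ⊥ ∧ P ⊔ Q ⊔ R ⊔ T = ⊤ ∧
    (Q.subgroupOf (Q ⊔ R ⊔ T)).Normal ∧ Q ⊓ (R ⊔ T) = ⊥ ∧
    (R.subgroupOf (R ⊔ T)).Normal ∧ R ⊓ T = ⊥

/- Solubility reduces to the case of a simple group `G`. Let `p` be the smallest prime divisor of
`|G|`. A normal cyclic subgroup of order `p` has an automorphism group of order `p - 1`, so in a
supersoluble group without prime divisors below `p` every element acts on a normal `p`-subgroup
with order a power of `p`. Applied to the normalizers of nontrivial `p`-subgroups, which are proper,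
this puts `G` into the situation of Frobenius' theorem: fusion in a Sylow `p`-subgroup `P` is
controlled by `P`, and the focal subgroup theorem gives `P ∩ G' = P' < P`. Hence `G' ≠ G`.

Suppose next that `|G|` has at least four prime divisors, so that Hall subgroups for at most three
primes are proper and hence supersoluble. Hall subgroups for two primes show that the Sylow
`p`-subgroup `P` for the largest prime `p` is normal. A minimal normal subgroup `N ≤ P` of `G` is
central in `P`, and Hall subgroups for three primes `p, q, r` show that Sylow `q`- and
`r`-subgroups commute modulo the centralizer of `N`, so `G'` centralizes `N`. An element acting on
one nontrivial element of `N` as a power map then acts on all of `N` as that power map; as this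
happens inside every Hall subgroup for `p` and `q`, each cyclic subgroup of `N` is normal, and `N`
is cyclic. Finally `G / N` is supersoluble, by induction if `p` divides its order and because it is
isomorphic to a complement of `N` otherwise. -/

universe u

section Supersoluble

variable {G H : Type*} [Group G] [Group H]

theorem zpowers_normal_of_forall_conj_mem {x : G} (hx : ∀ g, g * x * g⁻¹ ∈ zpowers x) :
    (zpowers x).Normal := by
  refine ⟨fun y hy g ↦ ?_⟩
  obtain ⟨k, rfl⟩ := mem_zpowers_iff.1 hy
  simpa only [conj_zpow] using zpow_mem (hx g) k

theorem card_quotient_lt_card [Finite G] {N : Subgroup G} (hN : N ≠ ⊥) :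
    Nat.card (G ⧸ N) < Nat.card G := by
  rw [card_eq_card_quotient_mul_card_subgroup N]
  exact lt_mul_of_one_lt_right Nat.card_pos (N.one_lt_card_iff_ne_bot.2 hN)

theorem isCyclic_quotient_subgroupOf_iff {A B : Subgroup G} [A.Normal] (hAB : A ≤ B) :
    IsCyclic (B ⧸ A.subgroupOf B) ↔ ∃ x, A ⊔ zpowers x = B := by
  have generates_iff (x : B) :
      zpowers (x : B ⧸ A.subgroupOf B) = ⊤ ↔ A ⊔ zpowers (x : G) = B := by
    have hx : zpowers x = (zpowers (x : G)).subgroupOf B := by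
      rw [subgroupOf, ← B.coe_subtype, ← MonoidHom.map_zpowers,
        comap_map_eq_self_of_injective B.subtype_injective]
    rw [← QuotientGroup.mk'_apply, ← MonoidHom.map_zpowers, ← QuotientGroup.range_mk',
      map_eq_range_iff, QuotientGroup.ker_mk', codisjoint_comm, codisjoint_iff,
      hx, ← subgroupOf_sup hAB (zpowers_le.2 x.2), subgroupOf_eq_top]
    exact ⟨(sup_le hAB (zpowers_le.2 x.2)).antisymm, Eq.ge⟩
  rw [isCyclic_iff_exists_zpowers_eq_top]
  constructor
  · rintro ⟨g, hg⟩
    obtain ⟨x, rfl⟩ := QuotientGroup.mk_surjective g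
    exact ⟨x, (generates_iff x).1 hg⟩
  · rintro ⟨x, hx⟩
    have hxB : x ∈ B := hx ▸ mem_sup_right (mem_zpowers x)
    exact ⟨_, (generates_iff ⟨x, hxB⟩).2 hx⟩

theorem isSupersoluble_iff : IsSupersoluble G ↔
    ∃ (n : ℕ) (c : Fin (n + 1) → Subgroup G), (∀ i, (c i).Normal) ∧ c 0 = ⊥ ∧ c (Fin.last n) = ⊤ ∧
      ∀ i : Fin n, ∃ x, c i.castSucc ⊔ zpowers x = c i.succ := by
  constructor
  · rintro ⟨n, c, hc, hbot, htop, hstep⟩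
    exact ⟨n, c, hc, hbot, htop, fun i ↦
      (isCyclic_quotient_subgroupOf_iff (hstep i).1).1 (hstep i).2⟩
  · rintro ⟨n, c, hc, hbot, htop, hstep⟩
    refine ⟨n, c, hc, hbot, htop, fun i ↦ ?_⟩
    obtain ⟨x, hx⟩ := hstep i
    have hle : c i.castSucc ≤ c i.succ := hx ▸ le_sup_left
    exact ⟨hle, (isCyclic_quotient_subgroupOf_iff hle).2 ⟨x, hx⟩⟩

namespace IsSupersoluble

theorem of_surjective (hG : IsSupersoluble G) {f : G →* H} (hf : Function.Surjective f) :
    IsSupersoluble H := by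
  obtain ⟨n, c, hc, hbot, htop, hstep⟩ := isSupersoluble_iff.1 hG
  refine isSupersoluble_iff.2 ⟨n, fun i ↦ (c i).map f, fun i ↦ (hc i).map f hf, ?_, ?_, fun i ↦ ?_⟩
  · simp only [hbot, Subgroup.map_bot]
  · simp only [htop, map_top_of_surjective f hf]
  · obtain ⟨x, hx⟩ := hstep i
    exact ⟨f x, by simp only [← hx, Subgroup.map_sup, MonoidHom.map_zpowers]⟩

theorem quotient (hG : IsSupersoluble G) (N : Subgroup G) [N.Normal] : IsSupersoluble (G ⧸ N) :=
  hG.of_surjective (QuotientGroup.mk'_surjective N)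

theorem of_quotient_zpowers {z : G} [(zpowers z).Normal] (hz : IsSupersoluble (G ⧸ zpowers z)) :
    IsSupersoluble G := by
  obtain ⟨n, c, hc, hbot, htop, hstep⟩ := isSupersoluble_iff.1 hz
  set π := QuotientGroup.mk' (zpowers z)
  refine isSupersoluble_iff.2
    ⟨n + 1, Fin.cons ⊥ fun i ↦ (c i).comap π, ?_, Fin.cons_zero _ _, ?_, ?_⟩
  · exact Fin.cases (by simp [normal_bot]) fun i ↦ by simpa using (hc i).comap π
  · rw [← Fin.succ_last, Fin.cons_succ, htop, comap_top]
  · refine Fin.cases ⟨z, ?_⟩ fun i ↦ ?_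
    · simp [hbot, π]
    · obtain ⟨y, hy⟩ := hstep i
      obtain ⟨x, rfl⟩ := QuotientGroup.mk'_surjective _ y
      refine ⟨x, ?_⟩
      have hker : π.ker ≤ (c i.castSucc).comap π := MonoidHom.ker_le_comap π _
      rw [← Fin.succ_castSucc, Fin.cons_succ, Fin.cons_succ, ← hy, ← MonoidHom.map_zpowers,
        ← comap_sup_eq _ _ _ (QuotientGroup.mk'_surjective _), comap_map_eq, sup_left_comm,
        sup_eq_left.2 hker, sup_comm]

theorem induction_on {motive : ∀ (G : Type u) [Group G], Prop} {G : Type u} [Group G]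
    (hG : IsSupersoluble G)
    (subsingleton : ∀ (G : Type u) [Group G] [Subsingleton G], motive G)
    (quotient : ∀ (G : Type u) [Group G] (z : G) [(zpowers z).Normal],
      motive (G ⧸ zpowers z) → motive G) : motive G := by
  obtain ⟨n, c, hc, hbot, htop, hstep⟩ := isSupersoluble_iff.1 hG
  clear hG
  induction n generalizing G with
  | zero =>
    have : Subsingleton G :=
      Subgroup.subsingleton_iff.1 (subsingleton_of_bot_eq_top (hbot.symm.trans htop))
    exact subsingleton G
  | succ n ih =>
    obtain ⟨z, hz⟩ := hstep 0
    have hz : zpowers z = c 1 := by simpa [hbot] using hz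
    have : (zpowers z).Normal := hz ▸ hc 1
    set π := QuotientGroup.mk' (zpowers z)
    have hπ : Function.Surjective π := QuotientGroup.mk'_surjective _
    refine quotient G z (ih (fun i ↦ (c i.succ).map π) (fun i ↦ (hc _).map π hπ) ?_ ?_ fun i ↦ ?_)
    · simp [← hz, π]
    · simpa [htop] using map_top_of_surjective π hπ
    · obtain ⟨x, hx⟩ := hstep i.succ
      exact ⟨π x, by
        simp only [← hx, Subgroup.map_sup, MonoidHom.map_zpowers, Fin.succ_castSucc]⟩

theorem isSolvable (hG : IsSupersoluble G) : Group.IsSolvable G := by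
  refine hG.induction_on (motive := fun G _ ↦ Group.IsSolvable G) (fun _ ↦ inferInstance) ?_
  intro G _ z _ _
  have : Group.IsSolvable (zpowers z) := Group.isSolvable_of_comm mul_comm'
  exact Group.isSolvable_of_ker_le_range (zpowers z).subtype (QuotientGroup.mk' (zpowers z))
    (by simp)

theorem exists_zpowers_normal (hG : IsSupersoluble G) {N : Subgroup G} [N.Normal] (hN : N ≠ ⊥) :
    ∃ x ∈ N, x ≠ 1 ∧ (zpowers x).Normal := by
  refine hG.induction_on (motive := fun G _ ↦ ∀ N : Subgroup G, N.Normal → N ≠ ⊥ →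
    ∃ x ∈ N, x ≠ 1 ∧ (zpowers x).Normal) (fun G _ _ N _ hN ↦ absurd (Subsingleton.elim _ _) hN)
    ?_ N ‹_› hN
  intro G _ z _ ih N _ hN
  by_cases hNz : N ⊓ zpowers z = ⊥
  · set π := QuotientGroup.mk' (zpowers z)
    have hNπ : N.map π ≠ ⊥ := by
      rw [Ne, Subgroup.map_eq_bot_iff, QuotientGroup.ker_mk']
      exact fun hle ↦ hN (inf_eq_left.2 hle ▸ hNz)
    obtain ⟨_, ⟨x, hxN, rfl⟩, hx1, hnormal⟩ :=
      ih _ (Normal.map ‹_› π (QuotientGroup.mk'_surjective _)) hNπ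
    refine ⟨x, hxN, fun h ↦ hx1 (by rw [h, map_one]), zpowers_normal_of_forall_conj_mem fun g ↦ ?_⟩
    obtain ⟨k, hk⟩ := mem_zpowers_iff.1 (hnormal.conj_mem _ (mem_zpowers _) (π g))
    have hmem : (x ^ k)⁻¹ * (g * x * g⁻¹) ∈ N ⊓ π.ker :=
      ⟨N.mul_mem (N.inv_mem (N.zpow_mem hxN k)) (Normal.conj_mem ‹_› x hxN g),
        π.eq_iff.1 (by simpa using hk.symm)⟩
    rw [QuotientGroup.ker_mk', hNz, mem_bot, inv_mul_eq_one] at hmem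
    exact mem_zpowers_iff.2 ⟨k, hmem⟩
  · obtain ⟨x, hx⟩ := (Subgroup.isCyclic_iff_exists_zpowers_eq_top _).1
      (isCyclic_of_le (inf_le_right : N ⊓ zpowers z ≤ zpowers z))
    have hxNz : x ∈ N ⊓ zpowers z := hx ▸ mem_zpowers x
    refine ⟨x, hxNz.1, ?_, hx ▸ inferInstance⟩
    rintro rfl
    exact hNz (by rw [← hx, zpowers_one_eq_bot])

theorem exists_prime_zpowers_normal [Finite G] (hG : IsSupersoluble G) {N : Subgroup G} [N.Normal]
    (hN : N ≠ ⊥) : ∃ z ∈ N, (orderOf z).Prime ∧ (zpowers z).Normal := by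
  obtain ⟨x, hxN, hx1, hx⟩ := hG.exists_zpowers_normal hN
  obtain ⟨p, hp, hpx⟩ := Nat.exists_prime_and_dvd (mt orderOf_eq_one_iff.1 hx1)
  have : Fact p.Prime := ⟨hp⟩
  obtain ⟨⟨z, hzx⟩, hz⟩ := exists_prime_orderOf_dvd_card' p (Nat.card_zpowers x ▸ hpx)
  rw [orderOf_mk] at hz
  obtain ⟨m, rfl⟩ := mem_zpowers_iff.1 hzx
  refine ⟨x ^ m, zpow_mem hxN m, hz ▸ hp, zpowers_normal_of_forall_conj_mem fun g ↦ ?_⟩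
  obtain ⟨k, hk⟩ := mem_zpowers_iff.1 (hx.conj_mem x (mem_zpowers x) g)
  exact mem_zpowers_iff.2 ⟨k, by rw [← conj_zpow, ← hk, zpow_comm]⟩

theorem induction_on_prime {motive : ∀ (G : Type u) [Group G], Prop} {G : Type u} [Group G]
    [Finite G] (hG : IsSupersoluble G)
    (subsingleton : ∀ (G : Type u) [Group G] [Subsingleton G], motive G)
    (quotient : ∀ (G : Type u) [Group G] [Finite G] (z : G) [(zpowers z).Normal],
      (orderOf z).Prime → motive (G ⧸ zpowers z) → motive G) : motive G := by
  induction hn : Nat.card G using Nat.strong_induction_on generalizing G with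
  | _ n ih =>
    rcases subsingleton_or_nontrivial G with _ | _
    · exact subsingleton G
    obtain ⟨z, -, hz, _⟩ := hG.exists_prime_zpowers_normal top_ne_bot
    have hz1 : zpowers z ≠ ⊥ := zpowers_ne_bot.2 fun h ↦ hz.ne_one (orderOf_eq_one_iff.2 h)
    exact quotient G z hz (ih _ (hn ▸ card_quotient_lt_card hz1) (hG.quotient _) rfl)

end IsSupersoluble

end Supersoluble

section LinearKernel

variable {p : ℕ} {G H : Type*} [Group G] [Group H]

/-- The intersection of the kernels of the homomorphisms from `G` to the units of `ZMod p`, for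
prime `p` its linear characters over the field with `p` elements. It acts trivially on the normal
subgroups of order `p`, which makes it act on a normal `p`-subgroup of a supersoluble group as a
`p`-group. -/
def linearKernel (p : ℕ) (G : Type*) [Group G] : Subgroup G :=
  ⨅ χ : G →* (ZMod p)ˣ, χ.ker

theorem mem_linearKernel_iff {x : G} : x ∈ linearKernel p G ↔ ∀ χ : G →* (ZMod p)ˣ, χ x = 1 := by
  simp only [linearKernel, mem_iInf, MonoidHom.mem_ker]

theorem map_mem_linearKernel (f : G →* H) {x : G} (hx : x ∈ linearKernel p G) :
    f x ∈ linearKernel p H :=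
  mem_linearKernel_iff.2 fun χ ↦ mem_linearKernel_iff.1 hx (χ.comp f)

theorem commutator_le_linearKernel : _root_.commutator G ≤ linearKernel p G :=
  le_iInf Abelianization.commutator_subset_ker

theorem mem_linearKernel_of_coprime [Fact p.Prime] {x : G} (hx : (orderOf x).Coprime (p - 1)) :
    x ∈ linearKernel p G := by
  refine mem_linearKernel_iff.2 fun χ ↦ orderOf_eq_one_iff.1 ?_
  refine Nat.eq_one_of_dvd_coprimes hx (orderOf_map_dvd χ x) ?_
  rw [← ZMod.card_units p, ← Nat.card_eq_fintype_card]
  exact orderOf_dvd_natCard _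

theorem linearKernel_le_centralizer_zpowers (z : G) [(zpowers z).Normal] :
    linearKernel (orderOf z) G ≤ centralizer (zpowers z : Set G) := by
  intro x hx y hy
  have hconj : MulAut.conjNormal x = (1 : MulAut (zpowers z)) := by
    rw [← Nat.card_zpowers] at hx
    let e := IsCyclic.mulAutMulEquiv (zpowers z)
    exact e.map_eq_one_iff.1 (mem_linearKernel_iff.1 hx (e.toMonoidHom.comp MulAut.conjNormal))
  have hxy : x * y * x⁻¹ = y := by
    rw [← MulAut.conjNormal_apply x ⟨y, hy⟩, hconj, MulAut.one_apply]
  exact (mul_inv_eq_iff_eq_mul.1 hxy).symm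

open scoped commutatorElement in
theorem commutatorElement_pow_left_of_commute {x y : G} (h : Commute x ⁅x, y⁆) (n : ℕ) :
    ⁅x ^ n, y⁆ = ⁅x, y⁆ ^ n := by
  induction n with
  | zero => simp
  | succ n ih =>
    calc ⁅x ^ (n + 1), y⁆ = x * ⁅x ^ n, y⁆ * x⁻¹ * ⁅x, y⁆ := by
          rw [pow_succ']; simp only [commutatorElement_def]; group
      _ = ⁅x, y⁆ ^ (n + 1) := by rw [ih, (h.pow_right n).eq, mul_inv_cancel_right, pow_succ]

open scoped commutatorElement in
theorem pow_mem_centralizer_of_mk_mem_centralizer [Fact p.Prime] {N : Subgroup G} [N.Normal]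
    (hN : IsPGroup p N) {z : G} [(zpowers z).Normal] (hz : (orderOf z).Prime) {x : G}
    (hx : x ∈ linearKernel p G)
    (hxz : (x : G ⧸ zpowers z) ∈ centralizer (N.map (QuotientGroup.mk' (zpowers z)) : Set _)) :
    x ^ p ∈ centralizer (N : Set G) := by
  refine mem_centralizer_iff_commutator_eq_one'.2 fun y hy ↦ ?_
  have hN' : ⁅x, y⁆ ∈ N := mul_mem (Normal.conj_mem ‹_› y hy x) (inv_mem hy)
  have hz' : ⁅x, y⁆ ∈ zpowers z := (QuotientGroup.eq_one_iff _).1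
    (mem_centralizer_iff_commutator_eq_one'.1 hxz y (mem_map_of_mem _ hy))
  by_cases hp : orderOf z = p
  · subst hp
    have hcomm : Commute x ⁅x, y⁆ := (linearKernel_le_centralizer_zpowers z hx _ hz').symm
    rw [commutatorElement_pow_left_of_commute hcomm]
    exact orderOf_dvd_iff_pow_eq_one.1 (orderOf_dvd_of_mem_zpowers hz')
  · have : Fact (orderOf z).Prime := ⟨hz⟩
    have hzp : IsPGroup (orderOf z) (zpowers z) := IsPGroup.of_card (n := 1) (by simp)
    have hone : ⁅x, y⁆ = 1 := disjoint_def.1 (IsPGroup.disjoint_of_ne _ p hp _ _ hzp hN) hz' hN'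
    exact ((commutatorElement_eq_one_iff_commute.1 hone).pow_left p).commutator_eq

theorem IsSupersoluble.exists_pow_mem_centralizer [Fact p.Prime] [Finite G]
    (hG : IsSupersoluble G) {N : Subgroup G} [N.Normal] (hN : IsPGroup p N) {x : G}
    (hx : x ∈ linearKernel p G) : ∃ m, x ^ p ^ m ∈ centralizer (N : Set G) := by
  refine hG.induction_on_prime (motive := fun G _ ↦ ∀ N : Subgroup G, N.Normal → IsPGroup p N →
    ∀ x ∈ linearKernel p G, ∃ m, x ^ p ^ m ∈ centralizer (N : Set G))
    (fun G _ _ N _ _ x _ ↦ ⟨0, fun y _ ↦ Subsingleton.elim _ _⟩) ?_ N ‹_› hN x hx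
  intro G _ _ z _ hz ih N _ hN x hx
  obtain ⟨m, hm⟩ := ih _ (Normal.map ‹_› _ (QuotientGroup.mk'_surjective _))
    (hN.map (QuotientGroup.mk' (zpowers z))) _ (map_mem_linearKernel (QuotientGroup.mk' _) hx)
  refine ⟨m + 1, ?_⟩
  rw [pow_succ p m, pow_mul]
  exact pow_mem_centralizer_of_mk_mem_centralizer hN hz (pow_mem hx _) hm

theorem mem_of_pow_mem_of_coprime_index {K : Subgroup G} [K.Normal] {x : G} {n : ℕ}
    (hx : x ^ n ∈ K) (hn : n.Coprime K.index) : x ∈ K := by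
  rw [← QuotientGroup.eq_one_iff] at hx ⊢
  rw [← pow_one (x : G ⧸ K), ← hn.gcd_eq_one, pow_gcd_eq_one]
  exact ⟨hx, pow_card_eq_one'⟩

theorem IsSupersoluble.commutator_le_centralizer [Fact p.Prime] [Finite G]
    (hG : IsSupersoluble G) {N : Subgroup G} [N.Normal] (hN : IsPGroup p N)
    (hp : ¬ p ∣ (centralizer (N : Set G)).index) :
    _root_.commutator G ≤ centralizer (N : Set G) := by
  intro x hx
  obtain ⟨m, hm⟩ := hG.exists_pow_mem_centralizer hN (commutator_le_linearKernel hx)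
  exact mem_of_pow_mem_of_coprime_index hm
    (((Fact.out : p.Prime).coprime_iff_not_dvd.2 hp).pow_left m)

theorem coprime_pred_of_forall_le {n q : ℕ} (hq : 1 < q) (hn : ∀ r, r.Prime → r ∣ n → q ≤ r) :
    n.Coprime (q - 1) :=
  Nat.coprime_of_dvd fun r hr hrn hrq ↦ by
    have := hn r hr hrn
    have := Nat.le_of_dvd (by omega) hrq
    omega

theorem IsSupersoluble.exists_pow_mem_centralizer_of_forall_le [Fact p.Prime] [Finite G]
    (hG : IsSupersoluble G) (hp : ∀ r, r.Prime → r ∣ Nat.card G → p ≤ r) {N : Subgroup G}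
    [N.Normal] (hN : IsPGroup p N) (x : G) : ∃ m, x ^ p ^ m ∈ centralizer (N : Set G) :=
  hG.exists_pow_mem_centralizer hN <| mem_linearKernel_of_coprime <|
    (coprime_pred_of_forall_le (Fact.out : p.Prime).one_lt hp).coprime_dvd_left
      (orderOf_dvd_natCard x)

theorem zpowers_le_normalizer_sylow [Fact p.Prime] {z : G} [(zpowers z).Normal]
    (hz : (orderOf z).Prime) (hzp : orderOf z ≤ p) (P : Sylow p G) :
    zpowers z ≤ normalizer (P : Set G) := by
  obtain rfl | _ := eq_or_ne (orderOf z) p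
  · exact (IsPGroup.le_sylow_of_normal (IsPGroup.of_card (n := 1) (by simp)) P).trans le_normalizer
  · have : Fact (orderOf z).Prime := ⟨hz⟩
    have hP : (P : Subgroup G) ≤ centralizer (zpowers z : Set G) := by
      intro x hx
      refine linearKernel_le_centralizer_zpowers z (mem_linearKernel_of_coprime ?_)
      obtain ⟨k, hk⟩ := IsPGroup.iff_orderOf.1 P.isPGroup' ⟨x, hx⟩
      rw [orderOf_mk] at hk
      refine coprime_pred_of_forall_le hz.one_lt fun r hr hrx ↦ ?_
      rwa [(Nat.prime_dvd_prime_iff_eq hr Fact.out).1 (hr.dvd_of_dvd_pow (hk ▸ hrx))]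
    exact (le_centralizer_iff.1 hP).trans (centralizer_le_normalizer _)

theorem IsSupersoluble.sylow_normal_of_forall_le [Fact p.Prime] [Finite G] (hG : IsSupersoluble G)
    (hp : ∀ r, r.Prime → r ∣ Nat.card G → r ≤ p) (P : Sylow p G) : (P : Subgroup G).Normal := by
  refine hG.induction_on_prime (motive := fun G _ ↦ (∀ r, r.Prime → r ∣ Nat.card G → r ≤ p) →
    ∀ P : Sylow p G, (P : Subgroup G).Normal) ?_ ?_ hp P
  · intro G _ _ _ P
    rw [Subsingleton.elim (P : Subgroup G) ⊥]
    infer_instance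
  intro G _ _ z _ hz ih hp P
  set π := QuotientGroup.mk' (zpowers z)
  have hπ : Function.Surjective π := QuotientGroup.mk'_surjective _
  have hPz : ((P : Subgroup G) ⊔ zpowers z).Normal := by
    have hmap := ih (fun r hr hrG ↦ hp r hr (hrG.trans (card_quotient_dvd_card _)))
      (P.mapSurjective hπ)
    simpa only [Sylow.coe_mapSurjective, comap_map_eq, π, QuotientGroup.ker_mk'] using hmap.comap π
  have hle : (P : Subgroup G) ⊔ zpowers z ≤ normalizer (P : Set G) := sup_le le_normalizer
    (zpowers_le_normalizer_sylow hz (hp _ hz (orderOf_dvd_natCard z)) P)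
  refine normalizer_eq_top_iff.1 (top_le_iff.1 ?_)
  calc ⊤ = normalizer (P : Set G) ⊔ ((P : Subgroup G) ⊔ zpowers z) :=
        (P.normalizer_sup_eq_top' le_sup_left).symm
    _ ≤ normalizer (P : Set G) := sup_le le_rfl hle

end LinearKernel

section Frobenius

variable {p : ℕ} {G H : Type*} [Group G] [Group H]

theorem mem_smul_sylow_iff {g x : G} {P : Sylow p G} : x ∈ g • P ↔ g⁻¹ * x * g ∈ P := by
  rw [← SetLike.mem_coe, Sylow.coe_smul, Set.mem_smul_set_iff_inv_smul_mem, ← map_inv]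
  simp

theorem lt_inf_normalizer_of_isNilpotent {D A : Subgroup G} [Group.IsNilpotent A] (hDA : D < A) :
    D < A ⊓ normalizer (D : Set G) := by
  have hlt := Group.normalizerCondition_of_isNilpotent (G := A) (D.subgroupOf A)
    (lt_top_iff_ne_top.2 fun h ↦ hDA.not_ge (subgroupOf_eq_top.1 h))
  rw [← subgroupOf_normalizer_eq hDA.le] at hlt
  refine lt_of_le_of_ne (le_inf hDA.le le_normalizer) fun heq ↦ hlt.ne ?_
  conv_lhs => rw [heq, inf_subgroupOf_left]

/-- Every automizer `N(D) / C(D)` of a `p`-subgroup `D` of `G` is a `p`-group: the condition of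
Frobenius' theorem on normal `p`-complements, stated for the image of `N(D)` in `MulAut D`. -/
def HasPGroupAutomizers (p : ℕ) (G : Type*) [Group G] : Prop :=
  ∀ D : Subgroup G, IsPGroup p D → IsPGroup p D.normalizerMonoidHom.range

variable [Fact p.Prime] [Finite G]

theorem ker_sup_sylow_eq_top {f : G →* H} (hf : IsPGroup p f.range) (P : Sylow p G) :
    f.ker ⊔ P = ⊤ := by
  have : Finite f.range := .of_surjective _ f.rangeRestrict_surjective
  obtain ⟨n, hn⟩ := IsPGroup.iff_card.1 hf
  have hcoprime : (p ^ n).Coprime P.index :=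
    ((Fact.out : p.Prime).coprime_iff_not_dvd.2 P.not_dvd_index).pow_left n
  refine index_eq_one.1 (Nat.eq_one_of_dvd_coprimes hcoprime ?_ ?_)
  · rw [← hn, ← index_ker]
    exact index_dvd_of_le le_sup_left
  · exact index_dvd_of_le le_sup_right

theorem exists_mem_ker_smul_eq {f : G →* H} (hf : IsPGroup p f.range) (P Q : Sylow p G) :
    ∃ k ∈ f.ker, k • P = Q := by
  obtain ⟨g, rfl⟩ := MulAction.exists_smul_eq G P Q
  have hg : g ∈ f.ker ⊔ P := ker_sup_sylow_eq_top hf P ▸ mem_top g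
  obtain ⟨k, hk, s, hs, rfl⟩ := mem_sup_of_normal_left.1 hg
  refine ⟨k, hk, ?_⟩
  rw [mul_smul, Sylow.smul_eq_iff_mem_normalizer.2 (le_normalizer hs)]

theorem HasPGroupAutomizers.exists_le_sylow_le_smul (hG : HasPGroupAutomizers p G)
    {D A B : Subgroup G} (hD : IsPGroup p D) (hA : IsPGroup p A) (hB : IsPGroup p B)
    (hAD : A ≤ normalizer (D : Set G)) (hBD : B ≤ normalizer (D : Set G)) :
    ∃ c ∈ centralizer (D : Set G), ∃ R : Sylow p G, A ≤ R ∧ B ≤ (c • R : Sylow p G) := by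
  obtain ⟨S, hS⟩ := (hA.comap_subtype (K := normalizer (D : Set G))).exists_le_sylow
  obtain ⟨T, hT⟩ := (hB.comap_subtype (K := normalizer (D : Set G))).exists_le_sylow
  obtain ⟨k, hk, rfl⟩ := exists_mem_ker_smul_eq (hG D hD) S T
  rw [normalizerMonoidHom_ker] at hk
  obtain ⟨R, hR⟩ := (S.isPGroup'.map (normalizer (D : Set G)).subtype).exists_le_sylow
  refine ⟨k, hk, R, fun a ha ↦ ?_, fun b hb ↦ ?_⟩
  · exact hR (mem_map_of_mem _ (hS (x := ⟨a, hAD ha⟩) ha))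
  · have hb' : (⟨b, hBD hb⟩ : normalizer (D : Set G)) ∈ k • S := hT hb
    exact mem_smul_sylow_iff.2 (hR (mem_map_of_mem _ (mem_smul_sylow_iff.1 hb')))

theorem lt_inf_normalizer_inf_of_sylow_ne {P Q : Sylow p G} (hPQ : P ≠ Q) :
    (P ⊓ Q : Subgroup G) < (P : Subgroup G) ⊓ normalizer ((P ⊓ Q : Subgroup G) : Set G) := by
  have : Group.IsNilpotent P := P.isPGroup'.isNilpotent
  refine lt_inf_normalizer_of_isNilpotent (inf_le_left.lt_of_ne fun h ↦ hPQ ?_)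
  exact Sylow.ext (P.is_maximal' Q.isPGroup' (inf_eq_left.1 h)).symm

theorem HasPGroupAutomizers.exists_mem_centralizer_smul_eq (hG : HasPGroupAutomizers p G)
    (P Q : Sylow p G) : ∃ c ∈ centralizer ((P ⊓ Q : Subgroup G) : Set G), c • P = Q := by
  induction hD : (P ⊓ Q : Subgroup G) using WellFoundedGT.induction generalizing P Q with
  | _ D ih =>
    subst hD
    obtain rfl | hne := eq_or_ne P Q
    · exact ⟨1, one_mem _, one_smul _ _⟩
    set D : Subgroup G := P ⊓ Q with hD
    have hPD : D < (P : Subgroup G) ⊓ normalizer (D : Set G) :=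
      lt_inf_normalizer_inf_of_sylow_ne hne
    have hQD : D < (Q : Subgroup G) ⊓ normalizer (D : Set G) := by
      simpa only [hD, inf_comm (Q : Subgroup G) P] using lt_inf_normalizer_inf_of_sylow_ne hne.symm
    obtain ⟨c, hc, R, hPR, hQR⟩ := hG.exists_le_sylow_le_smul (D := D)
      (P.isPGroup'.to_le inf_le_left) (P.isPGroup'.to_le inf_le_left)
      (Q.isPGroup'.to_le inf_le_left) inf_le_right inf_le_right
    have hPR' : D < (P ⊓ R : Subgroup G) := hPD.trans_le (le_inf inf_le_left hPR)
    have hRQ' : D < (↑(c • R) ⊓ Q : Subgroup G) := hQD.trans_le (le_inf hQR inf_le_left)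
    obtain ⟨a, ha, rfl⟩ := ih _ hPR' P R rfl
    obtain ⟨b, hb, hbQ⟩ := ih _ hRQ' (c • a • P) Q rfl
    refine ⟨b * c * a, mul_mem (mul_mem (centralizer_le hRQ'.le hb) hc)
      (centralizer_le hPR'.le ha), ?_⟩
    rw [mul_smul, mul_smul, hbQ]

theorem HasPGroupAutomizers.exists_mem_conj_eq (hG : HasPGroupAutomizers p G) (P : Sylow p G)
    {x u : G} (hx : x ∈ P) (hux : u * x * u⁻¹ ∈ P) : ∃ s ∈ P, s * x * s⁻¹ = u * x * u⁻¹ := by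
  have hxu : x ∈ (P ⊓ ↑(u⁻¹ • P) : Subgroup G) := ⟨hx, mem_smul_sylow_iff.2 (by simpa using hux)⟩
  obtain ⟨c, hc, hcP⟩ := hG.exists_mem_centralizer_smul_eq P (u⁻¹ • P)
  have huc : u * c ∈ normalizer (P : Set G) :=
    Sylow.smul_eq_iff_mem_normalizer.1 (by rw [mul_smul, hcP, smul_inv_smul])
  have hmem : ⟨u * c, huc⟩ ∈ P.normalizerMonoidHom.ker ⊔ P.subtype le_normalizer :=
    ker_sup_sylow_eq_top (hG P P.isPGroup') (P.subtype le_normalizer) ▸ mem_top _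
  obtain ⟨k, hk, s, hs, hks⟩ := mem_sup_of_normal_left.1 hmem
  rw [normalizerMonoidHom_ker] at hk
  have hsx : s * x * (s : G)⁻¹ ∈ P := mul_mem (mul_mem hs hx) (inv_mem hs)
  have hks' : (k * s : G) = u * c := congr_arg Subtype.val hks
  refine ⟨s, hs, ?_⟩
  calc s * x * (s : G)⁻¹ = k * (s * x * (s : G)⁻¹) * (k : G)⁻¹ :=
        eq_mul_inv_of_mul_eq (mem_centralizer_iff.1 hk _ hsx)
    _ = k * s * x * (k * s : G)⁻¹ := by group
    _ = u * (c * x * c⁻¹) * u⁻¹ := by rw [hks']; group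
    _ = u * x * u⁻¹ := by rw [← mem_centralizer_iff.1 hc x hxu, mul_inv_cancel_right]

open scoped commutatorElement in
theorem HasPGroupAutomizers.focalSubgroup_le (hG : HasPGroupAutomizers p G) (P : Sylow p G) :
    focalSubgroup (P : Subgroup G) ≤ ⁅(P : Subgroup G), (P : Subgroup G)⁆ := by
  rw [focalSubgroup_def, closure_le]
  rintro _ ⟨hxu, x, hx, u, rfl⟩
  have hux : u * x * u⁻¹ ∈ P := by
    have : (⁅x, u⁆)⁻¹ * x ∈ P := mul_mem (inv_mem hxu) hx
    simpa [commutatorElement_def, mul_assoc] using this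
  obtain ⟨s, hs, hsu⟩ := hG.exists_mem_conj_eq P hx hux
  have hcomm : ⁅x, u⁆ = ⁅x, s⁆ := by
    rw [← commutatorElement_inv, ← commutatorElement_inv s, commutatorElement_def,
      commutatorElement_def, hsu]
  rw [hcomm]
  exact commutator_mem_commutator hx hs

theorem HasPGroupAutomizers.commutator_ne_top (hG : HasPGroupAutomizers p G)
    (hp : p ∣ Nat.card G) : _root_.commutator G ≠ ⊤ := by
  intro hperfect
  obtain ⟨P⟩ : Nonempty (Sylow p G) := inferInstance
  have hP : (P : Subgroup G) ≤ ⁅(P : Subgroup G), (P : Subgroup G)⁆ := by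
    conv_lhs => rw [← top_inf_eq (P : Subgroup G), ← hperfect, commutator_inf_eq_focalSubgroup P]
    exact hG.focalSubgroup_le P
  have : Group.IsNilpotent P := P.isPGroup'.isNilpotent
  have : Nontrivial P := (nontrivial_iff_ne_bot _).2 (P.ne_bot_of_dvd_card hp)
  refine (Group.IsSolvable.commutator_lt_top_of_nontrivial P).ne (eq_top_iff.2 fun x _ ↦ ?_)
  rw [← map_subtype_commutator] at hP
  exact (mem_map_iff_mem (P : Subgroup G).subtype_injective).1 (hP x.2)

end Frobenius

section Solvable

variable {p : ℕ} {G : Type*} [Group G]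

theorem isSupersoluble_subgroup_quotient (hG : ∀ H : Subgroup G, H ≠ ⊤ → IsSupersoluble H)
    (N : Subgroup G) [N.Normal] (H : Subgroup (G ⧸ N)) (hH : H ≠ ⊤) : IsSupersoluble H := by
  have hπ : Function.Surjective (QuotientGroup.mk' N) := QuotientGroup.mk'_surjective N
  have hne : H.comap (QuotientGroup.mk' N) ≠ ⊤ := fun h ↦
    hH (comap_injective hπ (h.trans (comap_top _).symm))
  exact (hG _ hne).of_surjective ((QuotientGroup.mk' N).subgroupComap_surjective_of_surjective H hπ)

theorem hasPGroupAutomizers_of_forall_pow_mem_centralizer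
    (h : ∀ D : Subgroup G, IsPGroup p D → ∀ x ∈ normalizer (D : Set G),
      ∃ m, x ^ p ^ m ∈ centralizer (D : Set G)) : HasPGroupAutomizers p G := by
  rintro D hD ⟨_, ⟨x, hx⟩, rfl⟩
  obtain ⟨m, hm⟩ := h D hD x hx
  refine ⟨m, Subtype.ext ?_⟩
  rw [SubgroupClass.coe_pow, ← map_pow, OneMemClass.coe_one, ← MonoidHom.mem_ker,
    normalizerMonoidHom_ker]
  exact hm

variable [Finite G]

theorem hasPGroupAutomizers_of_isSimpleGroup [Fact p.Prime] [IsSimpleGroup G]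
    (hG : ∀ H : Subgroup G, H ≠ ⊤ → IsSupersoluble H)
    (hp : ∀ r, r.Prime → r ∣ Nat.card G → p ≤ r) : HasPGroupAutomizers p G := by
  refine hasPGroupAutomizers_of_forall_pow_mem_centralizer fun D hD x hx ↦ ?_
  by_cases hND : normalizer (D : Set G) = ⊤
  · obtain rfl | rfl := (normalizer_eq_top_iff.1 hND).eq_bot_or_eq_top
    · exact ⟨0, fun y hy ↦ by simp [mem_bot.1 hy]⟩
    · obtain ⟨m, hm⟩ := hD ⟨x, mem_top x⟩
      have hxm : x ^ p ^ m = 1 := congr_arg Subtype.val hm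
      exact ⟨m, hxm ▸ one_mem _⟩
  · obtain ⟨m, hm⟩ := (hG _ hND).exists_pow_mem_centralizer_of_forall_le
      (fun r hr hrN ↦ hp r hr (hrN.trans (card_subgroup_dvd_card _)))
      (N := D.subgroupOf (normalizer (D : Set G))) hD.comap_subtype ⟨x, hx⟩
    exact ⟨m, fun y hy ↦ congr_arg Subtype.val (hm ⟨y, le_normalizer hy⟩ hy)⟩

theorem isSolvable_of_isSimpleGroup [IsSimpleGroup G]
    (hG : ∀ H : Subgroup G, H ≠ ⊤ → IsSupersoluble H) : Group.IsSolvable G := by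
  have hp : (Nat.card G).minFac.Prime := Nat.minFac_prime Finite.one_lt_card.ne'
  have : Fact (Nat.card G).minFac.Prime := ⟨hp⟩
  have haut : HasPGroupAutomizers (Nat.card G).minFac G := hasPGroupAutomizers_of_isSimpleGroup hG
    fun r hr hrG ↦ Nat.minFac_le_of_dvd hr.two_le hrG
  have hcomm : _root_.commutator G = ⊥ :=
    (Normal.eq_bot_or_eq_top inferInstance).resolve_right
      (haut.commutator_ne_top (Nat.minFac_dvd _))
  rw [_root_.commutator_eq_bot_iff_center_eq_top, eq_top_iff] at hcomm
  exact Group.isSolvable_of_comm fun a b ↦ mem_center_iff.1 (hcomm (mem_top b)) a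

theorem isSolvable_of_forall_ne_top_isSupersoluble
    (hG : ∀ H : Subgroup G, H ≠ ⊤ → IsSupersoluble H) : Group.IsSolvable G := by
  induction hn : Nat.card G using Nat.strong_induction_on generalizing G with
  | _ n ih =>
    rcases subsingleton_or_nontrivial G with _ | _
    · infer_instance
    by_cases hsimple : ∀ N : Subgroup G, N.Normal → N = ⊥ ∨ N = ⊤
    · have : IsSimpleGroup G := ⟨hsimple⟩
      exact isSolvable_of_isSimpleGroup hG
    push Not at hsimple
    obtain ⟨N, _, hbot, htop⟩ := hsimple
    have : Group.IsSolvable N := (hG N htop).isSolvable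
    have : Group.IsSolvable (G ⧸ N) := ih _ (hn ▸ card_quotient_lt_card hbot)
      (isSupersoluble_subgroup_quotient hG N) rfl
    exact Group.isSolvable_of_ker_le_range N.subtype (QuotientGroup.mk' N) (by simp)

end Solvable

section Hall

variable {p : ℕ} {π : Set ℕ} {G H : Type*} [Group G] [Group H]

theorem eq_top_of_forall_prime {K : Subgroup G}
    (h : ∀ r, r.Prime → ∃ L ≤ K, ¬ r ∣ L.index) : K = ⊤ := by
  rw [← index_eq_one]
  by_contra hne
  obtain ⟨r, hr, hrK⟩ := Nat.exists_prime_and_dvd hne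
  obtain ⟨L, hL, hrL⟩ := h r hr
  exact hrL (hrK.trans (index_dvd_of_le hL))

theorem exists_isMinimalNormal_le [Finite G] {K : Subgroup G} (hK : K.Normal) (hne : K ≠ ⊥) :
    ∃ N ≤ K, IsMinimalNormal N := by
  obtain ⟨N, hNK, ⟨hN, hbot⟩, hmin⟩ :=
    (Set.toFinite {N : Subgroup G | N.Normal ∧ N ≠ ⊥}).exists_le_minimal ⟨hK, hne⟩
  exact ⟨N, hNK, hN, hbot, fun M hM hMN hMbot ↦ hMN.antisymm (hmin ⟨hM, hMbot⟩ hMN)⟩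

theorem IsMinimalNormal.isMulCommutative [Group.IsSolvable G] {N : Subgroup G}
    (hN : IsMinimalNormal N) : IsMulCommutative N := by
  have := hN.1
  have hlt : ⁅N, N⁆ < N := Group.IsSolvable.commutator_lt_of_ne_bot hN.2.1
  have hbot : ⁅N, N⁆ = ⊥ := not_ne_iff.1 fun h ↦ hlt.ne (hN.2.2 _ inferInstance hlt.le h)
  exact le_centralizer_iff_isMulCommutative.1 (commutator_eq_bot_iff_le_centralizer.1 hbot)

theorem IsMinimalNormal.exists_isPGroup [Finite G] [Group.IsSolvable G] {N : Subgroup G}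
    (hN : IsMinimalNormal N) : ∃ p, p.Prime ∧ IsPGroup p N := by
  have := hN.1
  have := hN.isMulCommutative
  have hp : (Nat.card N).minFac.Prime := Nat.minFac_prime (N.one_lt_card_iff_ne_bot.2 hN.2.1).ne'
  have : Fact (Nat.card N).minFac.Prime := ⟨hp⟩
  obtain ⟨P⟩ : Nonempty (Sylow (Nat.card N).minFac N) := inferInstance
  have : (P : Subgroup N).Characteristic := P.characteristic_of_normal inferInstance
  have hPN : (P : Subgroup N).map N.subtype = N := hN.2.2 _
    ConjAct.normal_of_characteristic_of_normal (map_subtype_le _)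
    (by rw [Ne, map_eq_bot_iff_of_injective _ N.subtype_injective]
        exact P.ne_bot_of_dvd_card (Nat.minFac_dvd _))
  exact ⟨_, hp, (P.isPGroup'.map N.subtype).to_le hPN.ge⟩

/-- `H` is a Hall `π`-subgroup of `G`; only the primes in `π` matter. -/
structure IsHall (π : Set ℕ) (H : Subgroup G) : Prop where
  mem_of_dvd_card {p : ℕ} : p.Prime → p ∣ Nat.card H → p ∈ π
  not_dvd_index {p : ℕ} : p.Prime → p ∈ π → ¬ p ∣ H.index

theorem IsHall.map_equiv {L : Subgroup G} (hL : IsHall π L) (e : G ≃* H) :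
    IsHall π (L.map (e : G →* H)) where
  mem_of_dvd_card hp hpL :=
    hL.mem_of_dvd_card hp (by rwa [card_map_of_injective e.injective] at hpL)
  not_dvd_index hp hpπ := by rw [index_map_equiv]; exact hL.not_dvd_index hp hpπ

theorem card_comap_mk (N : Subgroup G) [N.Normal] (L : Subgroup (G ⧸ N)) :
    Nat.card (L.comap (QuotientGroup.mk' N)) = Nat.card N * Nat.card L :=
  QuotientGroup.card_preimage_mk N (L : Set (G ⧸ N))

theorem exists_card_eq_of_coprime [Finite G] {N : Subgroup G} [N.Normal] {L : Subgroup (G ⧸ N)}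
    (hNL : (Nat.card N).Coprime (Nat.card L)) : ∃ M : Subgroup G, Nat.card M = Nat.card L := by
  set K := L.comap (QuotientGroup.mk' N)
  have hNK : N ≤ K := by simpa using (QuotientGroup.mk' N).ker_le_comap L
  have hcard : Nat.card (N.subgroupOf K) = Nat.card N :=
    Nat.card_congr (subgroupOfEquivOfLe hNK).toEquiv
  have hindex : (N.subgroupOf K).index = Nat.card L := by
    refine Nat.eq_of_mul_eq_mul_left (Nat.card_pos (α := N)) ?_
    rw [← card_comap_mk, ← hcard, card_mul_index]
  obtain ⟨M, hM⟩ := exists_right_complement'_of_coprime (hcard.symm ▸ hindex.symm ▸ hNL)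
  exact ⟨M.map K.subtype, by
    rw [card_map_of_injective K.subtype_injective, ← hM.symm.index_eq_card, hindex]⟩

theorem eq_of_dvd_card_of_isPGroup [Finite G] [Fact p.Prime] {N : Subgroup G}
    (hN : IsPGroup p N) {r : ℕ} (hr : r.Prime) (hrN : r ∣ Nat.card N) : r = p := by
  obtain ⟨n, hn⟩ := IsPGroup.iff_card.1 hN
  exact (Nat.prime_dvd_prime_iff_eq hr Fact.out).1 (hr.dvd_of_dvd_pow (hn ▸ hrN))

theorem IsHall.comap_mk [Finite G] [Fact p.Prime] {N : Subgroup G} [N.Normal] (hN : IsPGroup p N)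
    (hp : p ∈ π) {L : Subgroup (G ⧸ N)} (hL : IsHall π L) :
    IsHall π (L.comap (QuotientGroup.mk' N)) where
  mem_of_dvd_card hr hrL := by
    rw [card_comap_mk, hr.dvd_mul] at hrL
    obtain hrN | hrL := hrL
    · rwa [eq_of_dvd_card_of_isPGroup hN hr hrN]
    · exact hL.mem_of_dvd_card hr hrL
  not_dvd_index hr hrπ := by
    rw [index_comap_of_surjective _ (QuotientGroup.mk'_surjective N)]
    exact hL.not_dvd_index hr hrπ

theorem IsHall.of_card_eq [Finite G] [Fact p.Prime] {N : Subgroup G} [N.Normal]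
    (hN : IsPGroup p N) (hp : p ∉ π) {L : Subgroup (G ⧸ N)} (hL : IsHall π L) {M : Subgroup G}
    (hM : Nat.card M = Nat.card L) : IsHall π M where
  mem_of_dvd_card hr hrM := hL.mem_of_dvd_card hr (hM ▸ hrM)
  not_dvd_index {r} hr hrπ hrM := by
    have hindex : M.index = Nat.card N * L.index := by
      refine Nat.eq_of_mul_eq_mul_left (Nat.card_pos (α := L)) ?_
      rw [← hM, card_mul_index, hM, mul_left_comm, card_mul_index, mul_comm,
        ← card_eq_card_quotient_mul_card_subgroup]
    rw [hindex, hr.dvd_mul] at hrM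
    obtain hrN | hrL := hrM
    · exact hp (eq_of_dvd_card_of_isPGroup hN hr hrN ▸ hrπ)
    · exact hL.not_dvd_index hr hrπ hrL

theorem exists_isHall [Finite G] [Group.IsSolvable G] (π : Set ℕ) :
    ∃ H : Subgroup G, IsHall π H := by
  induction hn : Nat.card G using Nat.strong_induction_on generalizing G with
  | _ n ih =>
    rcases subsingleton_or_nontrivial G with _ | _
    · refine ⟨⊤, fun hr hrG ↦ absurd hrG (by simpa using hr.ne_one), fun hr _ ↦ ?_⟩
      rw [index_top]
      exact hr.not_dvd_one
    obtain ⟨N, -, hNmin⟩ := exists_isMinimalNormal_le (G := G) normal_top top_ne_bot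
    have := hNmin.1
    obtain ⟨p, hp, hN⟩ := hNmin.exists_isPGroup
    have : Fact p.Prime := ⟨hp⟩
    have := Group.isSolvable_of_surjective (QuotientGroup.mk'_surjective N)
    obtain ⟨L, hL⟩ := ih _ (hn ▸ card_quotient_lt_card hNmin.2.1) (G := G ⧸ N) rfl
    by_cases hpπ : p ∈ π
    · exact ⟨_, hL.comap_mk hN hpπ⟩
    obtain ⟨n, hNn⟩ := IsPGroup.iff_card.1 hN
    have hcoprime : (Nat.card N).Coprime (Nat.card L) := by
      rw [hNn]
      exact (hp.coprime_iff_not_dvd.2 fun h ↦ hpπ (hL.mem_of_dvd_card hp h)).pow_left n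
    obtain ⟨M, hM⟩ := exists_card_eq_of_coprime hcoprime
    exact ⟨M, hL.of_card_eq hN hpπ hM⟩

theorem exists_sylow_le [Finite G] [Fact p.Prime] {L : Subgroup G} (hL : ¬ p ∣ L.index) :
    ∃ P : Sylow p G, (P : Subgroup G) ≤ L := by
  obtain ⟨T⟩ : Nonempty (Sylow p L) := inferInstance
  have hT : ¬ p ∣ ((T : Subgroup L).map L.subtype).index := by
    rw [index_map_subtype, (Fact.out : p.Prime).dvd_mul, not_or]
    exact ⟨T.not_dvd_index, hL⟩
  exact ⟨(T.isPGroup'.map L.subtype).toSylow hT, map_subtype_le _⟩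

theorem le_of_isPGroup_of_not_dvd_index [Finite G] [Fact p.Prime] {N L : Subgroup G} [N.Normal]
    (hN : IsPGroup p N) (hL : ¬ p ∣ L.index) : N ≤ L := by
  obtain ⟨P, hPL⟩ := exists_sylow_le hL
  exact (hN.le_sylow_of_normal P).trans hPL

theorem exists_isHall_ge_sylow [Finite G] [Group.IsSolvable G] [Fact p.Prime] (hp : p ∈ π)
    (P : Sylow p G) : ∃ L : Subgroup G, IsHall π L ∧ P ≤ L := by
  obtain ⟨L, hL⟩ := exists_isHall (G := G) π
  obtain ⟨R, hRL⟩ := exists_sylow_le (hL.not_dvd_index Fact.out hp)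
  obtain ⟨g, rfl⟩ := MulAction.exists_smul_eq G R P
  exact ⟨_, hL.map_equiv (MulAut.conj g), map_mono hRL⟩

theorem IsHall.ne_top {T : Finset ℕ} {L : Subgroup G} (hL : IsHall (T : Set ℕ) L)
    (hT : T.card < (Nat.card G).primeFactors.card) : L ≠ ⊤ := by
  rintro rfl
  refine hT.not_ge (Finset.card_le_card fun r hr ↦ ?_)
  obtain ⟨hr, hrG, -⟩ := Nat.mem_primeFactors.1 hr
  exact hL.mem_of_dvd_card hr (by rwa [card_top])

end Hall

section MinimalNonsupersoluble

variable {p : ℕ} {G : Type*} [Group G]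

theorem commutator_top_le_of_forall_prime {B K : Subgroup G} [K.Normal]
    (h : ∀ r, r.Prime → ∃ L : Subgroup G, ¬ r ∣ L.index ∧ ⁅L, B⁆ ≤ K) :
    ⁅(⊤ : Subgroup G), B⁆ ≤ K := by
  set π := QuotientGroup.mk' K
  have commutator_le_iff (A : Subgroup G) :
      ⁅A, B⁆ ≤ K ↔ A ≤ (centralizer (B.map π : Set (G ⧸ K))).comap π := by
    rw [← map_le_iff_le_comap, ← commutator_eq_bot_iff_le_centralizer, ← map_commutator,
      Subgroup.map_eq_bot_iff, QuotientGroup.ker_mk']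
  rw [commutator_le_iff, top_le_iff]
  refine eq_top_of_forall_prime fun r hr ↦ ?_
  obtain ⟨L, hrL, hLB⟩ := h r hr
  exact ⟨L, (commutator_le_iff L).1 hLB, hrL⟩

open scoped commutatorElement in
theorem IsMinimalNormal.conj_eq_zpow {N : Subgroup G} (hN : IsMinimalNormal N)
    (hG : _root_.commutator G ≤ centralizer (N : Set G)) [IsMulCommutative N] {g x : G} {k : ℤ}
    (hx : x ∈ N) (hx1 : x ≠ 1) (hgx : g * x * g⁻¹ = x ^ k) {y : G} (hy : y ∈ N) :
    g * y * g⁻¹ = y ^ k := by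
  have := hN.1
  let E : Subgroup G :=
    { carrier := {y | y ∈ N ∧ g * y * g⁻¹ = y ^ k}
      one_mem' := ⟨one_mem N, by simp⟩
      mul_mem' := by
        rintro a b ⟨ha, hga⟩ ⟨hb, hgb⟩
        have hab : Commute a b := congr_arg Subtype.val (mul_comm' (⟨a, ha⟩ : N) ⟨b, hb⟩)
        exact ⟨mul_mem ha hb, by rw [hab.mul_zpow, ← hga, ← hgb, conj_mul]⟩
      inv_mem' := by
        rintro a ⟨ha, hga⟩
        exact ⟨inv_mem ha, by rw [inv_zpow, ← hga, conj_inv]⟩ }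
  have hE : E.Normal := by
    refine ⟨fun a ⟨ha, hga⟩ u ↦ ⟨Normal.conj_mem ‹_› a ha u, ?_⟩⟩
    have hcomm : ⁅g, u⁆ ∈ centralizer (N : Set G) :=
      hG (commutator_mem_commutator (mem_top g) (mem_top u))
    have hmem : u * (g * a * g⁻¹) * u⁻¹ ∈ N :=
      Normal.conj_mem ‹_› _ (Normal.conj_mem ‹_› a ha g) u
    calc g * (u * a * u⁻¹) * g⁻¹
        = ⁅g, u⁆ * (u * (g * a * g⁻¹) * u⁻¹) * ⁅g, u⁆⁻¹ := by
          rw [commutatorElement_def]; group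
      _ = u * (g * a * g⁻¹) * u⁻¹ := by
          rw [← mem_centralizer_iff.1 hcomm _ hmem, mul_inv_cancel_right]
      _ = (u * a * u⁻¹) ^ k := by rw [hga, conj_zpow]
  have hEN : E = N :=
    hN.2.2 E hE (fun a ha ↦ ha.1) fun hbot ↦ hx1 (mem_bot.1 (hbot ▸ (⟨hx, hgx⟩ : x ∈ E)))
  exact (hEN.ge hy).2

theorem isSupersoluble_quotient_of_coprime (hG : ∀ H : Subgroup G, H ≠ ⊤ → IsSupersoluble H)
    {N : Subgroup G} [N.Normal] (hN : N ≠ ⊥) (hcoprime : (Nat.card N).Coprime N.index) :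
    IsSupersoluble (G ⧸ N) := by
  obtain ⟨M, hM⟩ := exists_right_complement'_of_coprime hcoprime
  have hMtop : M ≠ ⊤ := by
    rintro rfl
    exact hN (isComplement'_top_right.1 hM)
  exact (hG M hMtop).of_surjective (f := (hM.symm.QuotientMulEquiv.symm : M →* G ⧸ N))
    hM.symm.QuotientMulEquiv.symm.surjective

variable [Finite G]

theorem primeFactors_card_quotient [Fact p.Prime] {N : Subgroup G} (hN : IsPGroup p N)
    (hp : p ∣ N.index) : (Nat.card (G ⧸ N)).primeFactors = (Nat.card G).primeFactors := by
  rw [card_eq_card_quotient_mul_card_subgroup N,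
    Nat.primeFactors_mul Nat.card_pos.ne' Nat.card_pos.ne', eq_comm, Finset.union_eq_left]
  intro r hr
  obtain ⟨hr, hrN, -⟩ := Nat.mem_primeFactors.1 hr
  obtain rfl := eq_of_dvd_card_of_isPGroup hN hr hrN
  exact Nat.mem_primeFactors.2 ⟨hr, hp, Nat.card_pos.ne'⟩

theorem inf_centralizer_ne_bot [Fact p.Prime] {N P : Subgroup G} [N.Normal] (hN : IsPGroup p N)
    (hP : IsPGroup p P) (hne : N ≠ ⊥) : N ⊓ centralizer (P : Set G) ≠ ⊥ := by
  let _ : MulAction P N := .compHom N ((MulAut.conjNormal (H := N)).comp P.subtype)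
  have smul_def (g : P) (x : N) : ((g • x : N) : G) = g * x * (g : G)⁻¹ := rfl
  have hp : p ∣ Nat.card N :=
    hN.card_eq_or_dvd.resolve_left (N.one_lt_card_iff_ne_bot.2 hne).ne'
  obtain ⟨x, hx, hx1⟩ := hP.exists_fixed_point_of_prime_dvd_card_of_fixed_point N hp
    (a := 1) fun g ↦ Subtype.ext (by simp [smul_def])
  refine ne_bot_iff_exists_ne_one.2 ⟨⟨x, x.2, fun g hg ↦ ?_⟩, fun h ↦
    hx1 (Subtype.ext (congr_arg Subtype.val h).symm)⟩
  simpa [smul_def, mul_inv_eq_iff_eq_mul] using congr_arg Subtype.val (hx ⟨g, hg⟩)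

theorem IsMinimalNormal.le_centralizer [Fact p.Prime] {N P : Subgroup G} [P.Normal]
    (hN : IsMinimalNormal N) (hNp : IsPGroup p N) (hP : IsPGroup p P) :
    P ≤ centralizer (N : Set G) := by
  have := hN.1
  rw [le_centralizer_iff, ← inf_eq_left]
  exact hN.2.2 _ inferInstance inf_le_left (inf_centralizer_ne_bot hNp hP hN.2.1)

theorem IsSupersoluble.commutator_subgroup_le_centralizer [Fact p.Prime] {L N : Subgroup G}
    [N.Normal] (hL : IsSupersoluble L) (hN : IsPGroup p N) (hNL : N ≤ L)
    (hp : ¬ p ∣ (centralizer (N : Set G)).index) : ⁅L, L⁆ ≤ centralizer (N : Set G) := by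
  have hle : (centralizer (N : Set G)).subgroupOf L ≤ centralizer (N.subgroupOf L : Set L) :=
    fun x hx y hy ↦ Subtype.ext (hx y hy)
  have hcomm := hL.commutator_le_centralizer (N := N.subgroupOf L) hN.comap_subtype fun hpL ↦
    hp (hpL.trans ((index_dvd_of_le hle).trans (relIndex_dvd_index_of_normal _ _)))
  rw [← map_subtype_commutator, map_le_iff_le_comap]
  exact fun x hx y hy ↦ congr_arg Subtype.val (hcomm hx ⟨y, hNL hy⟩ hy)

theorem exists_isSupersoluble_isHall_ge_sylow
    (hG : ∀ H : Subgroup G, H ≠ ⊤ → IsSupersoluble H) {T : Finset ℕ}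
    (hT : T.card < (Nat.card G).primeFactors.card) [Fact p.Prime] (hp : p ∈ T) (P : Sylow p G) :
    ∃ L : Subgroup G, IsSupersoluble L ∧ IsHall (T : Set ℕ) L ∧ P ≤ L := by
  have := isSolvable_of_forall_ne_top_isSupersoluble hG
  obtain ⟨L, hL, hPL⟩ := exists_isHall_ge_sylow (π := T) hp P
  exact ⟨L, hG L (hL.ne_top hT), hL, hPL⟩

theorem sylow_normal_of_two_lt_card_primeFactors
    (hG : ∀ H : Subgroup G, H ≠ ⊤ → IsSupersoluble H) (h2 : 2 < (Nat.card G).primeFactors.card)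
    [Fact p.Prime] (hp : ∀ r, r.Prime → r ∣ Nat.card G → r ≤ p) (P : Sylow p G) :
    (P : Subgroup G).Normal := by
  refine normalizer_eq_top_iff.1 (eq_top_of_forall_prime fun r hr ↦ ?_)
  obtain ⟨L, hL, hLpr, hPL⟩ := exists_isSupersoluble_isHall_ge_sylow hG (T := {p, r})
    (Finset.card_le_two.trans_lt h2) (by simp) P
  have hP : (P.subtype hPL : Subgroup L).Normal := hL.sylow_normal_of_forall_le
    (fun s hs hsL ↦ hp s hs (hsL.trans (card_subgroup_dvd_card L))) _
  exact ⟨L, (normal_subgroupOf_iff_le_normalizer hPL).1 hP, hLpr.not_dvd_index hr (by simp)⟩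

theorem commutator_le_centralizer_of_three_lt_card_primeFactors
    (hG : ∀ H : Subgroup G, H ≠ ⊤ → IsSupersoluble H) (h3 : 3 < (Nat.card G).primeFactors.card)
    [hp : Fact p.Prime] {N : Subgroup G} [N.Normal] (hN : IsPGroup p N)
    (hpN : ¬ p ∣ (centralizer (N : Set G)).index) :
    _root_.commutator G ≤ centralizer (N : Set G) := by
  refine commutator_top_le_of_forall_prime fun q hq ↦ ?_
  have : Fact q.Prime := ⟨hq⟩
  obtain ⟨Q⟩ : Nonempty (Sylow q G) := inferInstance
  refine ⟨Q, Q.not_dvd_index, ?_⟩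
  rw [commutator_comm]
  refine commutator_top_le_of_forall_prime fun r hr ↦ ?_
  obtain ⟨L, hL, hLpqr, hQL⟩ := exists_isSupersoluble_isHall_ge_sylow hG (T := {p, q, r})
    (Finset.card_le_three.trans_lt h3) (by simp) Q
  have hNL : N ≤ L := le_of_isPGroup_of_not_dvd_index hN (hLpqr.not_dvd_index hp.out (by simp))
  exact ⟨L, hLpqr.not_dvd_index hr (by simp), (commutator_mono le_rfl hQL).trans
    (hL.commutator_subgroup_le_centralizer hN hNL hpN)⟩

theorem IsMinimalNormal.exists_eq_zpowers (hG : ∀ H : Subgroup G, H ≠ ⊤ → IsSupersoluble H)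
    (h2 : 2 < (Nat.card G).primeFactors.card) [Fact p.Prime] {N : Subgroup G}
    (hN : IsMinimalNormal N) (hNp : IsPGroup p N)
    (hC : _root_.commutator G ≤ centralizer (N : Set G)) : ∃ x, N = zpowers x := by
  have := hN.1
  have := isSolvable_of_forall_ne_top_isSupersoluble hG
  have := hN.isMulCommutative
  obtain ⟨P⟩ : Nonempty (Sylow p G) := inferInstance
  obtain ⟨⟨x, hxN⟩, hx1⟩ := ne_bot_iff_exists_ne_one.1 hN.2.1
  have hx : (zpowers x).Normal := by
    refine normalizer_eq_top_iff.1 (eq_top_of_forall_prime fun q hq ↦ ?_)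
    obtain ⟨L, hL, hLpq, hPL⟩ := exists_isSupersoluble_isHall_ge_sylow hG (T := {p, q})
      (Finset.card_le_two.trans_lt h2) (by simp) P
    have hNL : N.subgroupOf L ≠ ⊥ := by
      rw [Ne, subgroupOf_eq_bot, disjoint_iff,
        inf_eq_left.2 ((hNp.le_sylow_of_normal P).trans hPL)]
      exact hN.2.1
    obtain ⟨y, hyN, hy1, hy⟩ := hL.exists_zpowers_normal hNL
    refine ⟨L, ?_, hLpq.not_dvd_index hq (by simp)⟩
    rw [zpowers_eq_closure, le_normalizer_closure_iff, ← zpowers_eq_closure]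
    rintro g hg _ rfl
    obtain ⟨k, hk⟩ := mem_zpowers_iff.1 (hy.conj_mem y (mem_zpowers y) ⟨g, hg⟩)
    have hgy : g * y * g⁻¹ = (y : G) ^ k := congr_arg Subtype.val hk.symm
    rw [hN.conj_eq_zpow hC hyN (fun h ↦ hy1 (Subtype.ext h)) hgy hxN]
    exact zpow_mem_zpowers _ _
  refine ⟨x, (hN.2.2 _ hx (zpowers_le.2 hxN) fun h ↦ hx1 (Subtype.ext ?_)).symm⟩
  exact zpowers_eq_bot.1 h

theorem exists_isMinimalNormal_zpowers (hG : ∀ H : Subgroup G, H ≠ ⊤ → IsSupersoluble H)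
    (h3 : 3 < (Nat.card G).primeFactors.card) :
    ∃ p x, p.Prime ∧ IsMinimalNormal (zpowers x : Subgroup G) ∧ IsPGroup p (zpowers x) := by
  obtain ⟨p, hp, hmax⟩ := (Nat.card G).primeFactors.exists_max_image id
    (Finset.card_pos.1 (by omega))
  obtain ⟨hp, hpG, hG0⟩ := Nat.mem_primeFactors.1 hp
  have : Fact p.Prime := ⟨hp⟩
  obtain ⟨P⟩ : Nonempty (Sylow p G) := inferInstance
  have hP : (P : Subgroup G).Normal := sylow_normal_of_two_lt_card_primeFactors (p := p) hG
    (by omega) (fun r hr hrG ↦ hmax r (Nat.mem_primeFactors.2 ⟨hr, hrG, hG0⟩)) P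
  obtain ⟨N, hNP, hN⟩ := exists_isMinimalNormal_le hP (P.ne_bot_of_dvd_card hpG)
  have := hN.1
  have hNp : IsPGroup p N := P.isPGroup'.to_le hNP
  have hpN : ¬ p ∣ (centralizer (N : Set G)).index := fun hpN ↦
    P.not_dvd_index (hpN.trans (index_dvd_of_le (hN.le_centralizer hNp P.isPGroup')))
  obtain ⟨x, rfl⟩ := hN.exists_eq_zpowers hG (by omega) hNp
    (commutator_le_centralizer_of_three_lt_card_primeFactors hG h3 hNp hpN)
  exact ⟨p, x, hp, hN, hNp⟩

theorem isSupersoluble_of_three_lt_card_primeFactors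
    (hG : ∀ H : Subgroup G, H ≠ ⊤ → IsSupersoluble H) (h3 : 3 < (Nat.card G).primeFactors.card) :
    IsSupersoluble G := by
  induction hn : Nat.card G using Nat.strong_induction_on generalizing G with
  | _ n ih =>
    obtain ⟨p, x, hp, hx, hxp⟩ := exists_isMinimalNormal_zpowers hG h3
    have : Fact p.Prime := ⟨hp⟩
    have := hx.1
    refine IsSupersoluble.of_quotient_zpowers (z := x) ?_
    by_cases hpx : p ∣ (zpowers x).index
    · exact ih _ (hn ▸ card_quotient_lt_card hx.2.1) (isSupersoluble_subgroup_quotient hG _)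
        (by rwa [primeFactors_card_quotient hxp hpx]) rfl
    · obtain ⟨m, hm⟩ := IsPGroup.iff_card.1 hxp
      exact isSupersoluble_quotient_of_coprime hG hx.2.1
        (hm ▸ (hp.coprime_iff_not_dvd.2 hpx).pow_left m)

end MinimalNonsupersoluble

/-- A minimal nonsupersoluble group is soluble and has at most `3` prime divisors. -/
theorem minimalNonsupersoluble_solvable_and_primes (G : Type*) [Group G] [Finite G]
    (h : IsMinimalNonsupersoluble G) :
    IsSolvable G ∧ (Nat.card G).primeFactors.card ≤ 3 :=
  ⟨isSolvable_of_forall_ne_top_isSupersoluble h.2,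
    not_lt.1 fun h3 ↦ h.1 (isSupersoluble_of_three_lt_card_primeFactors h.2 h3)⟩
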